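/- Let A(n) be the directed graph whose vertices are the hyperbinary expansions of n and whose arcs are single rewriting steps 02 → 10 or 12 → 20 (leading 2 treated as 02). Then A(n) (viewed as an undirected graph) is a tree, i.e., the number of arcs equals b(n) − 1, if and only if n = 2^(s+t+1) + 2^s − 1 or n = 2^(s+t+1) − 2^s − 1 (> 0) for some nonnegative integers s, t. -/

import Mathlib

/-- The integer represented by a word of digits (most significant first). -/
def hval (w : List ℕ) : ℕ := w.foldl (fun a d => 2 * a + d) 0

/-- `w` is a hyperbinary expansion of `n`: digits in {0,1,2}, nonzero leading
digit, representing `n`.  (The empty word is the unique expansion of `0`.) -/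
def IsHyp (n : ℕ) (w : List ℕ) : Prop :=
  (∀ d ∈ w, d ≤ 2) ∧ w.head? ≠ some 0 ∧ hval w = n

/-- `b n`: the number of hyperbinary expansions of `n` (so `b 0 = 1`). -/
noncomputable def hb (n : ℕ) : ℕ := Set.ncard {w : List ℕ | IsHyp n w}

/-- A single rewriting step: `02 → 10` or `12 → 20`, a leading `2` treated as `02`. -/
def Step (u v : List ℕ) : Prop :=
  (∃ x y : List ℕ, u = x ++ [0, 2] ++ y ∧ v = x ++ [1, 0] ++ y) ∨
  (∃ x y : List ℕ, u = x ++ [1, 2] ++ y ∧ v = x ++ [2, 0] ++ y) ∨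
  (∃ y : List ℕ, u = 2 :: y ∧ v = 1 :: 0 :: y)

/-- Strict shortlex order: first by length, then lexicographically. -/
def Shortlex (u v : List ℕ) : Prop :=
  u.length < v.length ∨ (u.length = v.length ∧ List.Lex (· < ·) u v)

/-- Number of maximal blocks of consecutive `2`'s in a word. -/
def blocks2 : List ℕ → ℕ
  | [] => 0
  | d :: rest => blocks2 rest + (if d = 2 ∧ rest.head? ≠ some 2 then 1 else 0)

/-!
The expansions of `2m + 1` are those of `m` followed by `1`, and the expansions of `2m + 2` are
those of `m` followed by `2` together with those of `m + 1` followed by `0`. An arc either lies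
inside one of these copies, or rewrites the last two digits and so leads from the copy of `A(m)`
to the copy of `A(m + 1)`; there are `b(⌊m/2⌋)` arcs of the latter kind. Writing `a(n)` for the
number of arcs, the excess `e(n) = a(n) + 1 - b(n)` therefore satisfies `e(2m + 1) = e(m)` and
`e(2m + 2) = e(m) + e(m + 1) + (b(⌊m/2⌋) - 1)`. All terms are nonnegative, so `A(2m + 2)` is a tree
exactly when `A(m)` and `A(m + 1)` are trees and `⌊m/2⌋ + 1` is a power of two. In terms of
`N = n + 1` the trees are thus closed under doubling and halving, and an odd `N` gives a tree
exactly when `N = 2^k ± 1`.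
-/

@[elab_as_elim]
theorem diatomic_induction {P : ℕ → Prop} (n : ℕ) (zero : P 0) (odd : ∀ m, P m → P (2 * m + 1))
    (even : ∀ m, P m → P (m + 1) → P (2 * m + 2)) : P n := by
  induction n using Nat.strong_induction_on with
  | _ n ih =>
    obtain rfl | ⟨m, rfl | rfl⟩ : n = 0 ∨ ∃ m, n = 2 * m + 1 ∨ n = 2 * m + 2 := by
      rcases n.even_or_odd' with ⟨_ | k, rfl | rfl⟩
      exacts [.inl rfl, .inr ⟨0, .inl rfl⟩, .inr ⟨k, .inr rfl⟩, .inr ⟨k + 1, .inl rfl⟩]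
    · exact zero
    · exact odd m (ih m (by lia))
    · exact even m (ih m (by lia)) (ih (m + 1) (by lia))

section AppendSingleton

variable {α : Type*}

theorem disjoint_image_append_singleton {a b : α} (hab : a ≠ b) (S T : Set (List α)) :
    Disjoint ((· ++ [a]) '' S) ((· ++ [b]) '' T) := by
  rw [Set.disjoint_left]
  rintro _ ⟨x, -, rfl⟩ ⟨y, -, h⟩
  exact hab (List.append_singleton_inj.1 h).2.symm

theorem prodMap_append_injective (x y : List α) :
    Function.Injective (Prod.map (· ++ x) (· ++ y)) :=
  (List.append_left_injective x).prodMap (List.append_left_injective y)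

theorem disjoint_image_prodMap_append_singleton {a b c d : α} (h : a ≠ c ∨ b ≠ d)
    (S T : Set (List α × List α)) :
    Disjoint (Prod.map (· ++ [a]) (· ++ [b]) '' S) (Prod.map (· ++ [c]) (· ++ [d]) '' T) := by
  rw [Set.disjoint_left]
  rintro _ ⟨p, -, rfl⟩ ⟨q, -, hpq⟩
  obtain ⟨h₁, h₂⟩ := Prod.mk.inj hpq
  rcases h with hac | hbd
  · exact hac (List.append_singleton_inj.1 h₁).2.symm
  · exact hbd (List.append_singleton_inj.1 h₂).2.symm

end AppendSingleton

section HyperbinaryExpansions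

variable {m n d : ℕ} {u w : List ℕ}

theorem hval_append_singleton (w : List ℕ) (d : ℕ) : hval (w ++ [d]) = 2 * hval w + d := by
  simp [hval]

theorem isHyp_nil_iff : IsHyp n [] ↔ n = 0 := by
  simp [IsHyp, hval, eq_comm]

theorem isHyp_append_singleton_iff :
    IsHyp (2 * m + d) (w ++ [d]) ↔ d ≤ 2 ∧ (w = [] → d ≠ 0) ∧ IsHyp m w := by
  have digits_iff : (∀ e ∈ w ++ [d], e ≤ 2) ↔ (∀ e ∈ w, e ≤ 2) ∧ d ≤ 2 := by
    rw [List.forall_mem_append, List.forall_mem_singleton]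
  have head_iff : (w ++ [d]).head? ≠ some 0 ↔ (w = [] → d ≠ 0) ∧ w.head? ≠ some 0 := by
    cases w <;> simp
  rw [IsHyp, IsHyp, digits_iff, head_iff, hval_append_singleton]
  lia

theorem IsHyp.exists_eq_append_singleton (h : IsHyp n u) (hn : n ≠ 0) :
    ∃ m w d, d ≤ 2 ∧ n = 2 * m + d ∧ u = w ++ [d] ∧ IsHyp m w := by
  rcases u.eq_nil_or_concat' with rfl | ⟨w, d, rfl⟩
  · exact absurd (isHyp_nil_iff.1 h) hn
  · obtain rfl : n = 2 * hval w + d := by rw [← hval_append_singleton, h.2.2]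
    obtain ⟨hd, -, hw⟩ := isHyp_append_singleton_iff.1 h
    exact ⟨_, w, d, hd, rfl, rfl, hw⟩

theorem isHyp_zero_iff : IsHyp 0 w ↔ w = [] := by
  refine ⟨fun h => ?_, fun h => h ▸ isHyp_nil_iff.2 rfl⟩
  induction w using List.reverseRecOn with
  | nil => rfl
  | append_singleton w d ih =>
    have hval_eq := h.2.2
    rw [hval_append_singleton] at hval_eq
    obtain rfl : d = 0 := by lia
    obtain ⟨-, hd, hw⟩ := (isHyp_append_singleton_iff (m := 0)).1 h
    exact absurd rfl (hd (ih hw))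

theorem IsHyp.ne_nil (h : IsHyp (n + 1) w) : w ≠ [] := by
  rintro rfl
  exact n.succ_ne_zero (isHyp_nil_iff.1 h)

theorem isHyp_two_mul_add_one_iff :
    IsHyp (2 * m + 1) u ↔ ∃ w, IsHyp m w ∧ w ++ [1] = u := by
  constructor
  · intro h
    obtain ⟨k, w, d, hd, hk, rfl, hw⟩ := h.exists_eq_append_singleton (by lia)
    obtain ⟨rfl, rfl⟩ : d = 1 ∧ k = m := by lia
    exact ⟨w, hw, rfl⟩
  · rintro ⟨w, hw, rfl⟩
    exact isHyp_append_singleton_iff.2 ⟨by decide, by simp, hw⟩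

theorem isHyp_two_mul_add_two_iff :
    IsHyp (2 * m + 2) u ↔
      (∃ w, IsHyp m w ∧ w ++ [2] = u) ∨ ∃ w, IsHyp (m + 1) w ∧ w ++ [0] = u := by
  constructor
  · intro h
    obtain ⟨k, w, d, hd, hk, rfl, hw⟩ := h.exists_eq_append_singleton (by lia)
    obtain ⟨rfl, rfl⟩ | ⟨rfl, rfl⟩ : d = 2 ∧ k = m ∨ d = 0 ∧ k = m + 1 := by lia
    · exact .inl ⟨w, hw, rfl⟩
    · exact .inr ⟨w, hw, rfl⟩
  · rintro (⟨w, hw, rfl⟩ | ⟨w, hw, rfl⟩)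
    · exact isHyp_append_singleton_iff.2 ⟨le_rfl, by simp, hw⟩
    · exact isHyp_append_singleton_iff (m := m + 1).2
        ⟨by decide, fun h => absurd h hw.ne_nil, hw⟩

theorem setOf_isHyp_zero : {w | IsHyp 0 w} = {[]} :=
  Set.ext fun _ => isHyp_zero_iff

theorem setOf_isHyp_two_mul_add_one (m : ℕ) :
    {w | IsHyp (2 * m + 1) w} = (· ++ [1]) '' {w | IsHyp m w} :=
  Set.ext fun _ => isHyp_two_mul_add_one_iff

theorem setOf_isHyp_two_mul_add_two (m : ℕ) :
    {w | IsHyp (2 * m + 2) w} =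
      (· ++ [2]) '' {w | IsHyp m w} ∪ (· ++ [0]) '' {w | IsHyp (m + 1) w} :=
  Set.ext fun _ => isHyp_two_mul_add_two_iff

theorem finite_setOf_isHyp (n : ℕ) : {w | IsHyp n w}.Finite := by
  induction n using diatomic_induction with
  | zero => simp only [setOf_isHyp_zero, Set.finite_singleton]
  | odd m ih => exact setOf_isHyp_two_mul_add_one m ▸ ih.image _
  | even m ih ih' => exact setOf_isHyp_two_mul_add_two m ▸ (ih.image _).union (ih'.image _)

theorem hb_zero : hb 0 = 1 := by
  rw [hb, setOf_isHyp_zero, Set.ncard_singleton]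

theorem hb_two_mul_add_one (m : ℕ) : hb (2 * m + 1) = hb m := by
  rw [hb, setOf_isHyp_two_mul_add_one,
    Set.ncard_image_of_injective _ (List.append_left_injective _), hb]

theorem hb_two_mul_add_two (m : ℕ) : hb (2 * m + 2) = hb m + hb (m + 1) := by
  rw [hb, setOf_isHyp_two_mul_add_two,
    Set.ncard_union_eq (disjoint_image_append_singleton two_ne_zero _ _)
      ((finite_setOf_isHyp _).image _) ((finite_setOf_isHyp _).image _),
    Set.ncard_image_of_injective _ (List.append_left_injective _),
    Set.ncard_image_of_injective _ (List.append_left_injective _), hb, hb]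

theorem hb_pos (n : ℕ) : 0 < hb n := by
  induction n using diatomic_induction with
  | zero => exact hb_zero ▸ one_pos
  | odd m ih => rwa [hb_two_mul_add_one]
  | even m ih _ => exact hb_two_mul_add_two m ▸ Nat.add_pos_left ih _

theorem hb_eq_one_iff (n : ℕ) : hb n = 1 ↔ ∃ k, n + 1 = 2 ^ k := by
  induction n using diatomic_induction with
  | zero => exact iff_of_true hb_zero ⟨0, rfl⟩
  | odd m ih =>
    rw [hb_two_mul_add_one, ih]
    constructor
    · rintro ⟨k, hk⟩
      exact ⟨k + 1, by rw [pow_succ]; lia⟩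
    · rintro ⟨_ | k, hk⟩
      · simp at hk
      · exact ⟨k, by rw [pow_succ] at hk; lia⟩
  | even m _ _ =>
    have hb_ne_one : hb (2 * m + 2) ≠ 1 := by
      have := hb_pos m
      have := hb_pos (m + 1)
      rw [hb_two_mul_add_two]
      lia
    refine iff_of_false hb_ne_one ?_
    rintro ⟨_ | k, hk⟩
    · simp at hk
    · rw [pow_succ] at hk
      lia

end HyperbinaryExpansions

section Arcs

variable {m d : ℕ} {u v : List ℕ}

/-- `v` arises from `u` by increasing the last digit, `0` or `1`, by one. The empty word is read as
the digit `0`, in the same way as `Step` reads a leading `2` as `02`. -/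
def IncrLast (u v : List ℕ) : Prop :=
  (∃ x d, d ≤ 1 ∧ u = x ++ [d] ∧ v = x ++ [d + 1]) ∨ u = [] ∧ v = [1]

theorem step_iff_exists_incrLast :
    Step u v ↔ ∃ x x' y, IncrLast x x' ∧ u = x ++ [2] ++ y ∧ v = x' ++ [0] ++ y := by
  constructor
  · rintro (⟨x, y, rfl, rfl⟩ | ⟨x, y, rfl, rfl⟩ | ⟨y, rfl, rfl⟩)
    · exact ⟨x ++ [0], x ++ [1], y, .inl ⟨x, 0, zero_le_one, rfl, rfl⟩, by simp, by simp⟩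
    · exact ⟨x ++ [1], x ++ [2], y, .inl ⟨x, 1, le_rfl, rfl, rfl⟩, by simp, by simp⟩
    · exact ⟨[], [1], y, .inr ⟨rfl, rfl⟩, rfl, rfl⟩
  · rintro ⟨x, x', y, ⟨z, d, hd, rfl, rfl⟩ | ⟨rfl, rfl⟩, rfl, rfl⟩
    · obtain rfl | rfl := Nat.le_one_iff_eq_zero_or_eq_one.1 hd
      · exact .inl ⟨z, y, by simp, by simp⟩
      · exact .inr (.inl ⟨z, y, by simp, by simp⟩)
    · exact .inr (.inr ⟨y, rfl, rfl⟩)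

theorem not_step_nil : ¬ Step [] v := by
  simp [Step]

theorem step_append_singleton_iff {a b : ℕ} :
    Step (u ++ [a]) (v ++ [b]) ↔ a = b ∧ Step u v ∨ a = 2 ∧ b = 0 ∧ IncrLast u v := by
  simp only [step_iff_exists_incrLast]
  constructor
  · rintro ⟨x, x', y, hx, hu, hv⟩
    rcases y.eq_nil_or_concat' with rfl | ⟨y, c, rfl⟩
    · simp only [List.append_nil, List.append_singleton_inj] at hu hv
      obtain ⟨⟨rfl, rfl⟩, rfl, rfl⟩ := And.intro hu hv
      exact .inr ⟨rfl, rfl, hx⟩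
    · simp only [← List.append_assoc, List.append_singleton_inj] at hu hv
      exact .inl ⟨hu.2.trans hv.2.symm, x, x', y, hx, hu.1, hv.1⟩
  · rintro (⟨rfl, x, x', y, hx, rfl, rfl⟩ | ⟨rfl, rfl, h⟩)
    · exact ⟨x, x', y ++ [a], hx, by simp, by simp⟩
    · exact ⟨u, v, [], h, by simp, by simp⟩

/-- The arcs of the graph `A(n)`, as pairs of its vertices. -/
def arcs (n : ℕ) : Set (List ℕ × List ℕ) :=
  {p | IsHyp n p.1 ∧ IsHyp n p.2 ∧ Step p.1 p.2}

/-- The pairs of an expansion of `m` and one of `m + 1` related by `IncrLast`. They correspond to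
the arcs of `A(2m + 2)` that change the last digit, from `2` to `0`. -/
def incrPairs (m : ℕ) : Set (List ℕ × List ℕ) :=
  {p | IsHyp m p.1 ∧ IsHyp (m + 1) p.2 ∧ IncrLast p.1 p.2}

theorem finite_arcs (n : ℕ) : (arcs n).Finite :=
  ((finite_setOf_isHyp n).prod (finite_setOf_isHyp n)).subset fun _ h => ⟨h.1, h.2.1⟩

theorem finite_incrPairs (m : ℕ) : (incrPairs m).Finite :=
  ((finite_setOf_isHyp m).prod (finite_setOf_isHyp (m + 1))).subset fun _ h => ⟨h.1, h.2.1⟩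

theorem arcs_zero : arcs 0 = ∅ := by
  refine Set.eq_empty_of_forall_notMem ?_
  rintro ⟨u, v⟩ ⟨hu, -, h⟩
  obtain rfl := isHyp_zero_iff.1 hu
  exact not_step_nil h

theorem arcs_two_mul_add_one (m : ℕ) :
    arcs (2 * m + 1) = Prod.map (· ++ [1]) (· ++ [1]) '' arcs m := by
  ext ⟨u, v⟩
  simp only [arcs, Set.mem_ofPred_eq, Set.mem_image, Prod.exists, Prod.map_apply, Prod.mk.injEq,
    isHyp_two_mul_add_one_iff]
  constructor
  · rintro ⟨⟨u, hu, rfl⟩, ⟨v, hv, rfl⟩, h⟩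
    exact ⟨u, v, ⟨hu, hv, by simpa [step_append_singleton_iff] using h⟩, rfl, rfl⟩
  · rintro ⟨u, v, ⟨hu, hv, h⟩, rfl, rfl⟩
    exact ⟨⟨u, hu, rfl⟩, ⟨v, hv, rfl⟩, step_append_singleton_iff.2 (.inl ⟨rfl, h⟩)⟩

theorem arcs_two_mul_add_two (m : ℕ) :
    arcs (2 * m + 2) = Prod.map (· ++ [2]) (· ++ [2]) '' arcs m ∪
      Prod.map (· ++ [0]) (· ++ [0]) '' arcs (m + 1) ∪
      Prod.map (· ++ [2]) (· ++ [0]) '' incrPairs m := by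
  ext ⟨u, v⟩
  simp only [arcs, incrPairs, Set.mem_ofPred_eq, Set.mem_union, Set.mem_image, Prod.exists,
    Prod.map_apply, Prod.mk.injEq, isHyp_two_mul_add_two_iff]
  constructor
  · rintro ⟨⟨u, hu, rfl⟩ | ⟨u, hu, rfl⟩, ⟨v, hv, rfl⟩ | ⟨v, hv, rfl⟩, h⟩ <;>
      simp only [step_append_singleton_iff] at h
    · exact .inl (.inl ⟨u, v, ⟨hu, hv, by simpa using h⟩, rfl, rfl⟩)
    · exact .inr ⟨u, v, ⟨hu, hv, by simpa using h⟩, rfl, rfl⟩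
    · simp at h
    · exact .inl (.inr ⟨u, v, ⟨hu, hv, by simpa using h⟩, rfl, rfl⟩)
  · rintro ((⟨u, v, ⟨hu, hv, h⟩, rfl, rfl⟩ | ⟨u, v, ⟨hu, hv, h⟩, rfl, rfl⟩) |
      ⟨u, v, ⟨hu, hv, h⟩, rfl, rfl⟩)
    · exact ⟨.inl ⟨u, hu, rfl⟩, .inl ⟨v, hv, rfl⟩, step_append_singleton_iff.2 (.inl ⟨rfl, h⟩)⟩
    · exact ⟨.inr ⟨u, hu, rfl⟩, .inr ⟨v, hv, rfl⟩, step_append_singleton_iff.2 (.inl ⟨rfl, h⟩)⟩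
    · exact ⟨.inl ⟨u, hu, rfl⟩, .inr ⟨v, hv, rfl⟩, step_append_singleton_iff.2 (.inr ⟨rfl, rfl, h⟩)⟩

theorem incrPairs_zero : incrPairs 0 = {([], [1])} := by
  ext ⟨u, v⟩
  simp only [incrPairs, Set.mem_ofPred_eq, isHyp_zero_iff, Set.mem_singleton_iff, Prod.mk.injEq]
  constructor
  · rintro ⟨rfl, -, h⟩
    simpa [IncrLast] using h
  · rintro ⟨rfl, rfl⟩
    exact ⟨rfl, by simp [IsHyp, hval], .inr ⟨rfl, rfl⟩⟩

theorem incrPairs_two_mul_add (hd : d ≤ 1) (hpos : 2 * m + d ≠ 0) :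
    incrPairs (2 * m + d) = (fun w => (w ++ [d], w ++ [d + 1])) '' {w | IsHyp m w} := by
  ext ⟨u, v⟩
  simp only [incrPairs, Set.mem_ofPred_eq, Set.mem_image, Prod.mk.injEq]
  constructor
  · rintro ⟨hu, -, ⟨x, e, he, rfl, rfl⟩ | ⟨rfl, -⟩⟩
    · obtain ⟨k, w, c, -, hk, hw, hx⟩ := hu.exists_eq_append_singleton hpos
      obtain ⟨rfl, rfl⟩ := List.append_singleton_inj.1 hw
      obtain ⟨rfl, rfl⟩ : e = d ∧ k = m := by lia
      exact ⟨x, hx, rfl, rfl⟩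
    · exact absurd (isHyp_nil_iff.1 hu) hpos
  · rintro ⟨w, hw, rfl, rfl⟩
    have hd_ne : w = [] → d ≠ 0 := by
      rintro rfl rfl
      exact hpos (by rw [isHyp_nil_iff.1 hw])
    exact ⟨isHyp_append_singleton_iff.2 ⟨by lia, hd_ne, hw⟩,
      isHyp_append_singleton_iff.2 ⟨by lia, by simp, hw⟩, .inl ⟨w, d, hd, rfl, rfl⟩⟩

theorem ncard_incrPairs (m : ℕ) : (incrPairs m).ncard = hb (m / 2) := by
  rcases eq_or_ne m 0 with rfl | hm
  · rw [incrPairs_zero, Set.ncard_singleton, Nat.zero_div, hb_zero]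
  · have inj : Function.Injective fun w : List ℕ => (w ++ [m % 2], w ++ [m % 2 + 1]) :=
      fun x y h => List.append_left_injective _ (congrArg Prod.fst h)
    conv_lhs => rw [← Nat.div_add_mod m 2]
    rw [incrPairs_two_mul_add (by lia) (by lia), Set.ncard_image_of_injective _ inj, hb]

theorem ncard_arcs_two_mul_add_one (m : ℕ) : (arcs (2 * m + 1)).ncard = (arcs m).ncard := by
  rw [arcs_two_mul_add_one, Set.ncard_image_of_injective _ (prodMap_append_injective _ _)]

theorem ncard_arcs_two_mul_add_two (m : ℕ) :
    (arcs (2 * m + 2)).ncard = (arcs m).ncard + (arcs (m + 1)).ncard + hb (m / 2) := by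
  have fin₂ := (finite_arcs m).image (Prod.map (· ++ [2]) (· ++ [2]))
  have fin₀ := (finite_arcs (m + 1)).image (Prod.map (· ++ [0]) (· ++ [0]))
  rw [arcs_two_mul_add_two,
    Set.ncard_union_eq (Set.disjoint_union_left.2
      ⟨disjoint_image_prodMap_append_singleton (.inr two_ne_zero) _ _,
        disjoint_image_prodMap_append_singleton (.inl two_ne_zero.symm) _ _⟩)
      (fin₂.union fin₀) ((finite_incrPairs m).image _),
    Set.ncard_union_eq (disjoint_image_prodMap_append_singleton (.inl two_ne_zero) _ _) fin₂ fin₀]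
  simp only [Set.ncard_image_of_injective _ (prodMap_append_injective _ _), ncard_incrPairs]

theorem hb_le_ncard_arcs_add_one (n : ℕ) : hb n ≤ (arcs n).ncard + 1 := by
  induction n using diatomic_induction with
  | zero => rw [hb_zero]; lia
  | odd m ih => rwa [hb_two_mul_add_one, ncard_arcs_two_mul_add_one]
  | even m ih ih' =>
    have := hb_pos (m / 2)
    rw [hb_two_mul_add_two, ncard_arcs_two_mul_add_two]
    lia

theorem ncard_arcs_add_one_eq_hb_two_mul_add_two_iff (m : ℕ) :
    (arcs (2 * m + 2)).ncard + 1 = hb (2 * m + 2) ↔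
      (arcs m).ncard + 1 = hb m ∧ (arcs (m + 1)).ncard + 1 = hb (m + 1) ∧ hb (m / 2) = 1 := by
  have := hb_le_ncard_arcs_add_one m
  have := hb_le_ncard_arcs_add_one (m + 1)
  have := hb_pos (m / 2)
  rw [hb_two_mul_add_two, ncard_arcs_two_mul_add_two]
  lia

end Arcs

section TwoPowAddSub

variable {m k N : ℕ}

/-- `N` is a sum or a positive difference of two distinct powers of two. These are the values of
`n + 1` for which `A(n)` is a tree; the difference is written without truncated subtraction. -/
def IsTwoPowAddSub (N : ℕ) : Prop :=
  ∃ s t, N = 2 ^ (s + t + 1) + 2 ^ s ∨ N + 2 ^ s = 2 ^ (s + t + 1)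

theorem isTwoPowAddSub_two_pow (k : ℕ) : IsTwoPowAddSub (2 ^ k) :=
  ⟨k, 0, .inr (by ring)⟩

theorem isTwoPowAddSub_two_mul_iff : IsTwoPowAddSub (2 * N) ↔ IsTwoPowAddSub N := by
  constructor
  · rintro ⟨_ | s, t, h⟩
    · rw [zero_add, pow_succ] at h
      lia
    · refine ⟨s, t, ?_⟩
      rw [pow_succ 2 s, add_right_comm s 1 t, pow_succ 2 (s + t + 1)] at h
      lia
  · rintro ⟨s, t, h⟩
    refine ⟨s + 1, t, ?_⟩
    rw [pow_succ 2 s, add_right_comm s 1 t, pow_succ 2 (s + t + 1)]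
    lia

theorem isTwoPowAddSub_two_mul_add_one_iff :
    IsTwoPowAddSub (2 * m + 1) ↔ ∃ k, m = 2 ^ k ∨ m + 1 = 2 ^ k := by
  constructor
  · rintro ⟨_ | s, t, h⟩
    · refine ⟨t, ?_⟩
      rw [zero_add, pow_succ] at h
      lia
    · rw [pow_succ 2 s, add_right_comm s 1 t, pow_succ 2 (s + t + 1)] at h
      lia
  · rintro ⟨k, h⟩
    refine ⟨0, k, ?_⟩
    rw [zero_add, pow_succ]
    lia

theorem isTwoPowAddSub_two_pow_add_one (k : ℕ) : IsTwoPowAddSub (2 ^ k + 1) := by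
  rcases k with _ | k
  · exact isTwoPowAddSub_two_pow 1
  · rw [pow_succ, mul_comm]
    exact isTwoPowAddSub_two_mul_add_one_iff.2 ⟨k, .inl rfl⟩

theorem isTwoPowAddSub_of_add_one_eq_two_pow (hN : N ≠ 0) (h : N + 1 = 2 ^ k) :
    IsTwoPowAddSub N := by
  obtain ⟨j, rfl⟩ : ∃ j, k = j + 1 := Nat.exists_eq_succ_of_ne_zero (by rintro rfl; lia)
  exact ⟨0, j, .inr (by rw [pow_zero, zero_add, h])⟩

theorem exists_div_two_add_one_eq_two_pow_iff :
    (∃ k, m / 2 + 1 = 2 ^ k) ↔ ∃ k, m + 1 = 2 ^ k ∨ m + 2 = 2 ^ k := by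
  constructor
  · rintro ⟨k, hk⟩
    exact ⟨k + 1, by rw [pow_succ]; lia⟩
  · rintro ⟨_ | k, hk⟩
    · exact ⟨0, by lia⟩
    · exact ⟨k, by rw [pow_succ] at hk; lia⟩

theorem isTwoPowAddSub_and_of_two_mul_add_three (h : IsTwoPowAddSub (2 * m + 3)) :
    IsTwoPowAddSub (m + 1) ∧ IsTwoPowAddSub (m + 2) := by
  obtain ⟨k, hk | hk⟩ := (isTwoPowAddSub_two_mul_add_one_iff (m := m + 1)).1 h
  · rw [show m + 2 = m + 1 + 1 from rfl, hk]
    exact ⟨isTwoPowAddSub_two_pow k, isTwoPowAddSub_two_pow_add_one k⟩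
  · refine ⟨isTwoPowAddSub_of_add_one_eq_two_pow m.succ_ne_zero hk, ?_⟩
    exact hk ▸ isTwoPowAddSub_two_pow k

theorem hb_div_two_eq_one_iff (m : ℕ) : hb (m / 2) = 1 ↔ IsTwoPowAddSub (2 * m + 3) := by
  rw [hb_eq_one_iff, exists_div_two_add_one_eq_two_pow_iff]
  exact (isTwoPowAddSub_two_mul_add_one_iff (m := m + 1)).symm

theorem isTwoPowAddSub_add_one_iff (n : ℕ) : IsTwoPowAddSub (n + 1) ↔
    ∃ s t, n = 2 ^ (s + t + 1) + 2 ^ s - 1 ∨ n = 2 ^ (s + t + 1) - 2 ^ s - 1 := by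
  refine exists_congr fun s => exists_congr fun t => ?_
  have pow_lt : 2 ^ s < 2 ^ (s + t + 1) := Nat.pow_lt_pow_right one_lt_two (by lia)
  lia

end TwoPowAddSub

theorem ncard_arcs_add_one_eq_hb_iff (n : ℕ) :
    (arcs n).ncard + 1 = hb n ↔ IsTwoPowAddSub (n + 1) := by
  induction n using diatomic_induction with
  | zero =>
    have ncard_eq : (arcs 0).ncard + 1 = hb 0 := by rw [arcs_zero, Set.ncard_empty, hb_zero]
    exact iff_of_true ncard_eq (isTwoPowAddSub_two_pow 0)
  | odd m ih =>
    rw [ncard_arcs_two_mul_add_one, hb_two_mul_add_one, ih]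
    exact (isTwoPowAddSub_two_mul_iff (N := m + 1)).symm
  | even m ih ih' =>
    rw [ncard_arcs_add_one_eq_hb_two_mul_add_two_iff, ih, ih', hb_div_two_eq_one_iff, ← and_assoc]
    exact and_iff_right_of_imp isTwoPowAddSub_and_of_two_mul_add_three

theorem stmt19 (n : ℕ) (hn : 0 < n) :
    Set.ncard {p : List ℕ × List ℕ |
        IsHyp n p.1 ∧ IsHyp n p.2 ∧ Step p.1 p.2} = hb n - 1 ↔
      ∃ s t : ℕ, n = 2 ^ (s + t + 1) + 2 ^ s - 1 ∨
        n = 2 ^ (s + t + 1) - 2 ^ s - 1 := by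
  rw [← isTwoPowAddSub_add_one_iff, ← ncard_arcs_add_one_eq_hb_iff]
  exact eq_tsub_iff_add_eq_of_le (hb_pos n)
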